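/- arXiv:2509.14359 — 3 statements merged into one kernel-verified Lean document; each statement's English description precedes it below -/
import Mathlib

section
/- (Severi) Let n ≥ 1 and let n_1,…,n_s be positive integers. The Hermite interpolation problem (N,X) with scheme N = {n_1,…,n_s; n} is n-solvable for every set X of s distinct nodes in ℝ² if and only if Σ_{k=1}^s n_k ≤ n+1. -/
open MvPolynomial

/-- `Dij i j p` is the partial derivative `D^{ij} p = ∂^{i+j} p / ∂x^i ∂y^j`. -/
noncomputable def Dij (i j : ℕ) (p : MvPolynomial (Fin 2) ℝ) : MvPolynomial (Fin 2) ℝ :=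
  (fun q => pderiv (0 : Fin 2) q)^[i] ((fun q => pderiv (1 : Fin 2) q)^[j] p)

/-- The Hermite interpolation problem with multiplicities `nk` on the nodes `A` is
`n`-solvable: every data admits an interpolant in `Π_n`. -/
def HermiteSolvable (n s : ℕ) (nk : Fin s → ℕ) (A : Fin s → Fin 2 → ℝ) : Prop :=
  ∀ c : Fin s → ℕ → ℕ → ℝ,
    ∃ p : MvPolynomial (Fin 2) ℝ, p.totalDegree ≤ n ∧
      ∀ (k : Fin s) (i j : ℕ), i + j + 1 ≤ nk k → eval (A k) (Dij i j p) = c k i j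

/-!
Over `ℝ`, prescribing the derivatives of order `< m` at a node `A` amounts to prescribing a
polynomial modulo `𝔪 ^ m`, where `𝔪` is the maximal ideal of `A`: Taylor expansion at `A` turns
both into the coefficients of degree `< m`. Modulo `𝔪 ^ m` the theorem holds over every infinite
field and in every positive number of variables.

If `∑ m k ≤ n + 1`, let `G k` be a product of powers of degree-one polynomials vanishing at the
other nodes to the required orders but not at `A k`. It is a unit modulo `𝔪 k ^ m k`, so some
multiple `G k * q k` with `q k` of degree `< m k` has the wanted class there, and
`∑ k, G k * q k` is an interpolant. Conversely, put the nodes on the diagonal line, the `k`-th one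
having all its coordinates equal to `a k`, and interpolate `x ^ (n + 1)`, with `x` one of the
coordinates, by `p` of degree `≤ n`. On the diagonal the difference is, up to sign, a monic
polynomial of degree `n + 1` divisible by `∏ k, (X - a k) ^ m k`.
-/

section PointIdeal

variable {σ R : Type*} [CommRing R]

/-- The Taylor expansion at `A`, encoded as the substitution `p(x) ↦ p(x + A)`; the coefficients of
the result are the Taylor coefficients of `p` at `A`. -/
noncomputable def taylorExpansion (A : σ → R) : MvPolynomial σ R ≃ₐ[R] MvPolynomial σ R :=
  AlgEquiv.ofAlgHom (aeval fun i => X i + C (A i)) (aeval fun i => X i - C (A i))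
    (by ext i : 1; simp [← algebraMap_eq]) (by ext i : 1; simp [← algebraMap_eq])

@[simp]
lemma taylorExpansion_X (A : σ → R) (i : σ) : taylorExpansion A (X i) = X i + C (A i) :=
  aeval_X _ i

@[simp]
lemma taylorExpansion_C (A : σ → R) (a : R) : taylorExpansion A (C a) = C a :=
  aeval_C _ a

lemma taylorExpansion_symm_apply (A : σ → R) (p : MvPolynomial σ R) :
    (taylorExpansion A).symm p = aeval (fun i => X i - C (A i)) p :=
  rfl

lemma constantCoeff_taylorExpansion (A : σ → R) (p : MvPolynomial σ R) :
    constantCoeff (taylorExpansion A p) = eval A p := by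
  induction p using MvPolynomial.induction_on with
  | C a => simp
  | add p q hp hq => simp [hp, hq]
  | mul_X p i hp => simp [hp]

lemma taylorExpansion_pderiv (A : σ → R) (i : σ) (p : MvPolynomial σ R) :
    taylorExpansion A (pderiv i p) = pderiv i (taylorExpansion A p) := by
  classical
  induction p using MvPolynomial.induction_on with
  | C a => simp
  | add p q hp hq => simp only [map_add, hp, hq]
  | mul_X p j hp =>
    simp only [pderiv_mul, map_add, map_mul, hp, taylorExpansion_X, pderiv_X, pderiv_C, add_zero]
    by_cases h : i = j <;> simp [h]

/-- The ideal of polynomials vanishing at the point `A`; its `m`-th power plays the role of the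
polynomials vanishing at `A` to order `m`. -/
noncomputable def pointIdeal (A : σ → R) : Ideal (MvPolynomial σ R) :=
  RingHom.ker (eval A)

lemma mem_pointIdeal {A : σ → R} {p : MvPolynomial σ R} : p ∈ pointIdeal A ↔ eval A p = 0 :=
  Iff.rfl

lemma pointIdeal_eq_comap_idealOfVars (A : σ → R) :
    pointIdeal A = (idealOfVars σ R).comap (taylorExpansion A) := by
  ext p
  rw [mem_pointIdeal, Ideal.mem_comap, ← pow_one (idealOfVars σ R), mem_pow_idealOfVars_iff']
  simp [Finsupp.degree_eq_zero_iff, ← constantCoeff_taylorExpansion, constantCoeff_eq]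

lemma mem_pointIdeal_pow_iff {A : σ → R} {m : ℕ} {p : MvPolynomial σ R} :
    p ∈ pointIdeal A ^ m ↔ ∀ d : σ →₀ ℕ, d.degree < m → coeff d (taylorExpansion A p) = 0 := by
  have hcomap : pointIdeal A ^ m = (idealOfVars σ R ^ m).comap (taylorExpansion A) := by
    have hmap (I : Ideal (MvPolynomial σ R)) :
        I.comap (taylorExpansion A) = I.map (taylorExpansion A).toRingEquiv.symm :=
      (Ideal.map_symm (taylorExpansion A).toRingEquiv).symm
    rw [pointIdeal_eq_comap_idealOfVars, hmap, hmap, Ideal.map_pow]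
  rw [hcomap, Ideal.mem_comap, ← mem_pow_idealOfVars_iff']

lemma totalDegree_aeval_le {τ : Type*} {f : σ → MvPolynomial τ R}
    (hf : ∀ i, (f i).totalDegree ≤ 1) (p : MvPolynomial σ R) :
    (aeval f p).totalDegree ≤ p.totalDegree := by
  rw [aeval_def, eval₂_eq]
  refine totalDegree_finsetSum_le fun d hd => ?_
  calc (algebraMap R (MvPolynomial τ R) (coeff d p) * ∏ i ∈ d.support, f i ^ d i).totalDegree
      ≤ 0 + ∑ i ∈ d.support, (f i ^ d i).totalDegree :=
        (totalDegree_mul _ _).trans <| add_le_add (totalDegree_C _).le (totalDegree_finsetProd _ _)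
    _ ≤ ∑ i ∈ d.support, d i := by
        rw [zero_add]
        exact Finset.sum_le_sum fun i _ =>
          (totalDegree_pow _ _).trans (mul_le_of_le_one_right' (hf i))
    _ ≤ p.totalDegree := le_totalDegree hd

lemma totalDegree_X_sub_C_le (i : σ) (a : R) : (X i - C a : MvPolynomial σ R).totalDegree ≤ 1 :=
  (totalDegree_sub_C_le _ _).trans <| (totalDegree_monomial_le _ _).trans (by simp)

lemma exists_totalDegree_le_sub_mem_pointIdeal_pow (A : σ → R) (d : ℕ) (f : MvPolynomial σ R) :
    ∃ q : MvPolynomial σ R, q.totalDegree ≤ d ∧ q - f ∈ pointIdeal A ^ (d + 1) := by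
  set T := ∑ i ∈ Finset.range (d + 1), homogeneousComponent i (taylorExpansion A f) with hT
  refine ⟨(taylorExpansion A).symm T, ?_, mem_pointIdeal_pow_iff.2 fun e he => ?_⟩
  · have hTd : T.totalDegree ≤ d := totalDegree_finsetSum_le fun i hi =>
      (homogeneousComponent_isHomogeneous i _).totalDegree_le.trans (Finset.mem_range_succ_iff.1 hi)
    rw [taylorExpansion_symm_apply]
    exact (totalDegree_aeval_le (fun i => totalDegree_X_sub_C_le i (A i)) T).trans hTd
  · simp [hT, coeff_sum, coeff_homogeneousComponent, he]

lemma exists_totalDegree_le_one_mem_pointIdeal {A B : σ → R} (h : A ≠ B) :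
    ∃ L : MvPolynomial σ R, L.totalDegree ≤ 1 ∧ L ∈ pointIdeal B ∧ L ∉ pointIdeal A := by
  obtain ⟨i, hi⟩ := Function.ne_iff.1 h
  exact ⟨X i - C (B i), totalDegree_X_sub_C_le i (B i), by simp [mem_pointIdeal],
    by simpa [mem_pointIdeal, sub_eq_zero] using hi⟩

lemma exists_mem_pointIdeal_pow_notMem_pointIdeal [IsDomain R] {ι : Type*} {A : ι → σ → R}
    (m : ι → ℕ) {S : Finset ι} {B : σ → R} (hB : ∀ l ∈ S, B ≠ A l) :
    ∃ G : MvPolynomial σ R, G.totalDegree ≤ ∑ l ∈ S, m l ∧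
      (∀ l ∈ S, G ∈ pointIdeal (A l) ^ m l) ∧ G ∉ pointIdeal B := by
  choose! L hLdeg hLmem hLnot using fun l hl =>
    exists_totalDegree_le_one_mem_pointIdeal (hB l hl)
  refine ⟨∏ l ∈ S, L l ^ m l, ?_, fun l hl => ?_, fun hmem => ?_⟩
  · refine (totalDegree_finsetProd _ _).trans (Finset.sum_le_sum fun l hl => ?_)
    exact (totalDegree_pow _ _).trans (mul_le_of_le_one_right' (hLdeg l hl))
  · exact Ideal.mem_of_dvd _ (Finset.dvd_prod_of_mem _ hl) (Ideal.pow_mem_pow (hLmem l hl) _)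
  · have hprime : (pointIdeal B).IsPrime := RingHom.ker_isPrime (eval B)
    obtain ⟨l, hl, hpow⟩ := hprime.prod_mem_iff.1 hmem
    exact hLnot l hl (hprime.mem_of_pow_mem _ hpow)

lemma X_sub_C_pow_dvd_aeval_X {a : R} {m : ℕ} {p : MvPolynomial σ R}
    (hp : p ∈ pointIdeal (fun _ => a) ^ m) :
    (Polynomial.X - Polynomial.C a) ^ m ∣ aeval (fun _ => Polynomial.X) p := by
  have hle : pointIdeal (fun _ : σ => a) ≤
      (Ideal.span {Polynomial.X - Polynomial.C a}).comap
        (aeval (R := R) fun _ : σ => (Polynomial.X : Polynomial R)) := by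
    intro q hq
    have heval : Polynomial.eval a (aeval (fun _ => Polynomial.X) q) = eval (fun _ => a) q := by
      simp [← Polynomial.coe_aeval_eq_eval, ← aeval_eq_eval, comp_aeval_apply]
    rw [Ideal.mem_comap, Ideal.mem_span_singleton, Polynomial.dvd_iff_isRoot,
      Polynomial.IsRoot.def, heval]
    exact hq
  rw [← Ideal.mem_span_singleton, ← Ideal.span_singleton_pow]
  exact Ideal.le_comap_pow _ m (Ideal.pow_right_mono hle m hp)

end PointIdeal

section JetInterpolation

/-- Jet interpolation at the nodes `A k` with multiplicities `m k`: every family of polynomials is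
matched, modulo the `m k`-th power of the ideal of `A k`, by a polynomial of total degree at most
`n`. The jet at `A k` is represented by a polynomial `f k`. -/
def JetSolvable {σ R ι : Type*} [CommRing R] (n : ℕ) (m : ι → ℕ) (A : ι → σ → R) :
    Prop :=
  ∀ f : ι → MvPolynomial σ R, ∃ p : MvPolynomial σ R, p.totalDegree ≤ n ∧
    ∀ k, p - f k ∈ pointIdeal (A k) ^ m k

variable {σ K ι : Type*} [Field K]

instance pointIdeal_isMaximal (A : σ → K) : (pointIdeal A).IsMaximal :=
  RingHom.ker_isMaximal_of_surjective _ fun a => ⟨C a, eval_C a⟩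

lemma exists_totalDegree_le_mul_sub_mem_pointIdeal_pow {A : σ → K} {G : MvPolynomial σ K}
    (hG : G ∉ pointIdeal A) (d : ℕ) (f : MvPolynomial σ K) :
    ∃ q : MvPolynomial σ K, q.totalDegree ≤ d ∧ G * q - f ∈ pointIdeal A ^ (d + 1) := by
  obtain ⟨u, v, hv, huv⟩ := Ideal.IsMaximal.exists_inv_pow (pointIdeal A) hG (d + 1)
  obtain ⟨q, hqdeg, hq⟩ := exists_totalDegree_le_sub_mem_pointIdeal_pow A d (u * f)
  refine ⟨q, hqdeg, ?_⟩
  have hsplit : G * q - f = G * (q - u * f) - f * v := by linear_combination f * huv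
  rw [hsplit]
  exact sub_mem (Ideal.mul_mem_left _ _ hq) (Ideal.mul_mem_left _ _ hv)

lemma exists_sub_mem_pointIdeal_pow_of_sum_le [Fintype ι] {A : ι → σ → K}
    (hA : Function.Injective A) {n : ℕ} {m : ι → ℕ} (hm : ∑ k, m k ≤ n + 1) (k : ι)
    (f : MvPolynomial σ K) :
    ∃ p : MvPolynomial σ K, p.totalDegree ≤ n ∧ p - f ∈ pointIdeal (A k) ^ m k ∧
      ∀ l ≠ k, p ∈ pointIdeal (A l) ^ m l := by
  classical
  rcases hmk : m k with _ | d
  · exact ⟨0, by simp, by simp, fun _ _ => zero_mem _⟩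
  obtain ⟨G, hGdeg, hGmem, hGnot⟩ := exists_mem_pointIdeal_pow_notMem_pointIdeal (A := A) m
    (S := Finset.univ.erase k) (B := A k) fun l hl => hA.ne (Finset.ne_of_mem_erase hl).symm
  obtain ⟨q, hqdeg, hq⟩ := exists_totalDegree_le_mul_sub_mem_pointIdeal_pow hGnot d f
  refine ⟨G * q, ?_, hq, fun l hl => Ideal.mul_mem_right _ _ (hGmem l (by simp [hl]))⟩
  have hsum := Finset.sum_erase_add _ m (Finset.mem_univ k)
  have hdeg := totalDegree_mul G q
  lia

theorem jetSolvable_of_sum_le [Fintype ι] {A : ι → σ → K} (hA : Function.Injective A) {n : ℕ}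
    {m : ι → ℕ} (hm : ∑ k, m k ≤ n + 1) : JetSolvable n m A := by
  classical
  intro f
  choose p hpdeg hpself hpother using
    fun k => exists_sub_mem_pointIdeal_pow_of_sum_le hA hm k (f k)
  refine ⟨∑ k, p k, totalDegree_finsetSum_le fun k _ => hpdeg k, fun k => ?_⟩
  have hsplit : ∑ l, p l - f k = (p k - f k) + ∑ l ∈ Finset.univ.erase k, p l := by
    rw [← Finset.add_sum_erase _ p (Finset.mem_univ k)]
    ring
  rw [hsplit]
  exact add_mem (hpself k) <| sum_mem fun l hl => hpother l k (Finset.ne_of_mem_erase hl).symm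

theorem sum_le_of_jetSolvable_diagonal [Fintype ι] [Nonempty σ] {a : ι → K}
    (ha : Function.Injective a) {n : ℕ} {m : ι → ℕ}
    (h : JetSolvable n m fun k (_ : σ) => a k) : ∑ k, m k ≤ n + 1 := by
  obtain ⟨i⟩ := ‹Nonempty σ›
  obtain ⟨p, hpdeg, hp⟩ := h fun _ => X i ^ (n + 1)
  set r : Polynomial K := aeval (fun _ => Polynomial.X) p
  have hr : r.natDegree < n + 1 := by
    have := aeval_natDegree_le p hpdeg (fun _ => Polynomial.X) fun _ => Polynomial.natDegree_X_le
    lia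
  have hdvd : ∏ k, (Polynomial.X - Polynomial.C (a k)) ^ m k ∣ Polynomial.X ^ (n + 1) - r := by
    refine Finset.prod_dvd_of_coprime
      (fun k _ l _ hkl => (Polynomial.pairwise_coprime_X_sub_C ha hkl).pow) fun k _ => ?_
    rw [dvd_sub_comm]
    simpa using X_sub_C_pow_dvd_aeval_X (hp k)
  have hmonic : (Polynomial.X ^ (n + 1) - r).Monic :=
    Polynomial.monic_X_pow_sub (Polynomial.degree_le_natDegree.trans_lt (Nat.cast_lt.2 hr))
  have hdeg := Polynomial.natDegree_le_of_dvd hdvd hmonic.ne_zero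
  have hprod : (∏ k, (Polynomial.X - Polynomial.C (a k)) ^ m k).natDegree = ∑ k, m k := by
    rw [Polynomial.natDegree_prod_of_monic _ _ fun k _ => (Polynomial.monic_X_sub_C _).pow _]
    simp
  have hsub : (Polynomial.X ^ (n + 1) - r).natDegree = n + 1 := by
    rw [Polynomial.natDegree_sub_eq_left_of_natDegree_lt (by simpa using hr),
      Polynomial.natDegree_X_pow]
  lia

theorem stmt_2_general [Infinite K] [Nonempty σ] [Fintype ι] (n : ℕ) (m : ι → ℕ) :
    (∀ A : ι → σ → K, Function.Injective A → JetSolvable n m A) ↔ ∑ k, m k ≤ n + 1 := by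
  refine ⟨fun h => ?_, fun hm A hA => jetSolvable_of_sum_le hA hm⟩
  let a : ι ↪ K := (Fintype.equivFin ι).toEmbedding.trans <|
    Fin.valEmbedding.trans (Infinite.natEmbedding K)
  have hdiag : Function.Injective fun k (_ : σ) => a k := fun k l hkl =>
    a.injective (congrFun hkl (Classical.arbitrary σ))
  exact sum_le_of_jetSolvable_diagonal a.injective (h _ hdiag)

end JetInterpolation

section Derivatives

lemma coeff_iterate_pderiv {σ R : Type*} [CommSemiring R] (i : σ) (n : ℕ) (p : MvPolynomial σ R)
    (d : σ →₀ ℕ) :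
    coeff d ((fun q => pderiv i q)^[n] p) =
      (d i + 1).ascFactorial n * coeff (d + Finsupp.single i n) p := by
  induction n generalizing p with
  | zero => simp
  | succ n ih =>
    rw [Function.iterate_succ_apply, ih, coeff_pderiv, add_assoc, ← Finsupp.single_add,
      Nat.ascFactorial_succ]
    simp only [Finsupp.add_apply, Finsupp.single_eq_same]
    push_cast
    ring

lemma eval_Dij (A : Fin 2 → ℝ) (i j : ℕ) (p : MvPolynomial (Fin 2) ℝ) :
    eval A (Dij i j p) = i.factorial * j.factorial *
      coeff (Finsupp.single 0 i + Finsupp.single 1 j) (taylorExpansion A p) := by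
  have hcomm : taylorExpansion A (Dij i j p) = Dij i j (taylorExpansion A p) := by
    have hiter (l : Fin 2) (n : ℕ) : Function.Semiconj (taylorExpansion A)
        (fun q => pderiv l q)^[n] (fun q => pderiv l q)^[n] :=
      Function.Semiconj.iterate_right (taylorExpansion_pderiv A l) n
    rw [Dij, (hiter 0 i).eq, (hiter 1 j).eq, Dij]
  rw [← constantCoeff_taylorExpansion, hcomm, Dij, constantCoeff_eq, coeff_iterate_pderiv,
    coeff_iterate_pderiv]
  simp [Nat.one_ascFactorial, mul_assoc]

lemma mem_pointIdeal_pow_iff_eval_Dij {A : Fin 2 → ℝ} {m : ℕ} {p : MvPolynomial (Fin 2) ℝ} :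
    p ∈ pointIdeal A ^ m ↔ ∀ i j, i + j < m → eval A (Dij i j p) = 0 := by
  simp only [mem_pointIdeal_pow_iff, eval_Dij, mul_eq_zero, Nat.cast_eq_zero, Nat.factorial_ne_zero,
    false_or]
  refine ⟨fun h i j hij => h _ (by simpa using hij), fun h d hd => ?_⟩
  rw [← Finsupp.univ_sum_single d, Fin.sum_univ_two] at hd ⊢
  exact h _ _ (by simpa using hd)

lemma exists_eval_Dij_eq (A : Fin 2 → ℝ) (m : ℕ) (c : ℕ → ℕ → ℝ) :
    ∃ f : MvPolynomial (Fin 2) ℝ, ∀ i j, i + j < m → eval A (Dij i j f) = c i j := by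
  let T : MvPowerSeries (Fin 2) ℝ := fun d =>
    c (d 0) (d 1) / ((d 0).factorial * (d 1).factorial)
  refine ⟨(taylorExpansion A).symm (MvPowerSeries.truncTotal m T), fun i j hij => ?_⟩
  rw [eval_Dij, AlgEquiv.apply_symm_apply, MvPowerSeries.coeff_truncTotal _ (by simpa using hij)]
  have hT : MvPowerSeries.coeff (Finsupp.single 0 i + Finsupp.single 1 j) T =
      c i j / (i.factorial * j.factorial) := by
    change T _ = _
    simp [T]
  rw [hT]
  field_simp

end Derivatives

theorem hermiteSolvable_iff_jetSolvable {n s : ℕ} {m : Fin s → ℕ} {A : Fin s → Fin 2 → ℝ} :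
    HermiteSolvable n s m A ↔ JetSolvable n m A := by
  have hmem (p q : MvPolynomial (Fin 2) ℝ) (k : Fin s) : p - q ∈ pointIdeal (A k) ^ m k ↔
      ∀ i j, i + j + 1 ≤ m k → eval (A k) (Dij i j p) = eval (A k) (Dij i j q) := by
    simp only [mem_pointIdeal_pow_iff_eval_Dij, eval_Dij, map_sub, coeff_sub, mul_sub, sub_eq_zero,
      Nat.lt_iff_add_one_le]
  constructor
  · intro h f
    obtain ⟨p, hpdeg, hp⟩ := h fun k i j => eval (A k) (Dij i j (f k))
    exact ⟨p, hpdeg, fun k => (hmem p (f k) k).2 (hp k)⟩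
  · intro h c
    choose f hf using fun k => exists_eval_Dij_eq (A k) (m k) (c k)
    obtain ⟨p, hpdeg, hp⟩ := h f
    exact ⟨p, hpdeg, fun k i j hij => ((hmem p (f k) k).1 (hp k) i j hij).trans (hf k i j hij)⟩

theorem stmt_2 (n s : ℕ) (hn : 1 ≤ n) (nk : Fin s → ℕ) (hnk : ∀ k, 1 ≤ nk k) :
    (∀ A : Fin s → Fin 2 → ℝ, Function.Injective A → HermiteSolvable n s nk A) ↔
      ∑ k, nk k ≤ n + 1 := by
  simp only [hermiteSolvable_iff_jetSolvable]
  exact stmt_2_general n nk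
end

section
/- Let N = {n_1,…,n_s; n} be a scheme for distinct nodes X = {A_1,…,A_s} ⊂ ℝ². If the Hermite interpolation problem (N,X) is n-solvable, then for any two distinct indices i, j ∈ {1,…,s} one has n_i + n_j ≤ n + 1. -/
/-!
Restrict a polynomial of degree at most `n` to a line `t ↦ u + t v` carrying some of the nodes. The
derivatives of the restriction come from iterated derivatives along `v`, and solvability lets these
be prescribed arbitrarily at each node, in every order below its multiplicity. So the multiplicities
on the line sum to the number of linear functionals taking independent values on the univariate
polynomials of degree at most `n`, a space of dimension `n + 1`. Two nodes always lie on a line.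
-/

open MvPolynomial

section DirectionalDerivative

variable {σ R : Type*} [CommSemiring R]

/-- The derivative `p ↦ ∑ i, v i * ∂p/∂x_i` along the vector `v`, encoded as the derivation sending
the variable `X i` to the constant `v i`, so that infinitely many variables are allowed. -/
noncomputable def directionalDeriv (v : σ → R) :
    Derivation R (MvPolynomial σ R) (MvPolynomial σ R) :=
  mkDerivation R fun i => C (v i)

lemma directionalDeriv_X (v : σ → R) (i : σ) :
    directionalDeriv v (X i) = C (v i) :=
  mkDerivation_X R _ i

lemma directionalDeriv_eq_sum_pderiv [Fintype σ] (v : σ → R) :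
    directionalDeriv v = ∑ i, v i • pderiv i := by
  classical
  refine derivation_ext fun j => ?_
  rw [directionalDeriv_X, ← Derivation.coeFnAddMonoidHom_apply (∑ i, v i • pderiv i), map_sum]
  simp [pderiv_X, Pi.single_apply, smul_eq_C_mul]

lemma commute_pderiv (i j : σ) :
    Commute (S := Module.End R (MvPolynomial σ R))
      (pderiv i).toLinearMap (pderiv j).toLinearMap := by
  classical
  have pderiv_pderiv_X (i j k : σ) : pderiv i (pderiv j (X k : MvPolynomial σ R)) = 0 := by
    simp [pderiv_X, Pi.single_apply, apply_ite]
  refine LinearMap.ext fun p => ?_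
  change pderiv i (pderiv j p) = pderiv j (pderiv i p)
  induction p using MvPolynomial.induction_on with
  | C a => simp
  | add p q hp hq => simp only [map_add, hp, hq]
  | mul_X p k hp =>
    simp only [pderiv_mul, map_add, hp, pderiv_pderiv_X]
    ring

end DirectionalDerivative

section LineRestriction

variable {σ R : Type*} [CommSemiring R] (u v : σ → R)

/-- The univariate polynomial `p(u + T v)`, the restriction of `p` to the line through `u` with
direction `v`. -/
noncomputable def lineRestriction : MvPolynomial σ R →ₐ[R] Polynomial R :=
  aeval fun i => Polynomial.C (u i) + Polynomial.C (v i) * Polynomial.X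

lemma lineRestriction_X (i : σ) :
    lineRestriction u v (X i) = Polynomial.C (u i) + Polynomial.C (v i) * Polynomial.X :=
  aeval_X _ i

lemma eval_lineRestriction (t : R) (p : MvPolynomial σ R) :
    (lineRestriction u v p).eval t = eval (u + t • v) p := by
  induction p using MvPolynomial.induction_on with
  | C a => simp [lineRestriction]
  | add p q hp hq => simp [hp, hq]
  | mul_X p i hp => simp [hp, lineRestriction_X, mul_comm t]

lemma natDegree_lineRestriction_le (p : MvPolynomial σ R) :
    (lineRestriction u v p).natDegree ≤ p.totalDegree := by
  simpa [lineRestriction] using aeval_natDegree_le p le_rfl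
    (fun i => Polynomial.C (u i) + Polynomial.C (v i) * Polynomial.X) (n := 1)
    fun i => by compute_degree

lemma derivative_lineRestriction (p : MvPolynomial σ R) :
    Polynomial.derivative (lineRestriction u v p) = lineRestriction u v (directionalDeriv v p) := by
  induction p using MvPolynomial.induction_on with
  | C a => simp [lineRestriction]
  | add p q hp hq => simp [hp, hq]
  | mul_X p i hp =>
    have restrict_C : lineRestriction u v (C (v i)) = Polynomial.C (v i) := by
      simp [lineRestriction]
    simp only [map_mul, map_add, Polynomial.derivative_mul, Derivation.leibniz, smul_eq_mul, hp,
      lineRestriction_X, directionalDeriv_X, restrict_C, Polynomial.derivative_C,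
      Polynomial.derivative_X]
    ring

lemma eval_iterate_derivative_lineRestriction (m : ℕ) (t : R) (p : MvPolynomial σ R) :
    (Polynomial.derivative^[m] (lineRestriction u v p)).eval t =
      eval (u + t • v) ((directionalDeriv v)^[m] p) := by
  have intertwine : Function.Semiconj (lineRestriction u v) (directionalDeriv v)
      Polynomial.derivative := fun q => (derivative_lineRestriction u v q).symm
  rw [← (intertwine.iterate_right m).eq, eval_lineRestriction]

end LineRestriction

lemma card_le_of_forall_exists_natDegree_le {R ι : Type*} [CommRing R] [Nontrivial R] [Fintype ι]
    {n : ℕ} (φ : ι → Polynomial R →ₗ[R] R)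
    (h : ∀ c : ι → R, ∃ q : Polynomial R, q.natDegree ≤ n ∧ ∀ i, φ i q = c i) :
    Fintype.card ι ≤ n + 1 := by
  let Φ : (Fin (n + 1) → R) →ₗ[R] ι → R :=
    LinearMap.pi φ ∘ₗ (Polynomial.degreeLT R (n + 1)).subtype ∘ₗ
      (Polynomial.degreeLTEquiv R (n + 1)).symm.toLinearMap
  have surjective_Φ : Function.Surjective Φ := by
    intro c
    obtain ⟨q, q_deg, hq⟩ := h c
    have q_mem : q ∈ Polynomial.degreeLT R (n + 1) :=
      Polynomial.mem_degreeLT.2 <|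
        (Polynomial.degree_le_of_natDegree_le q_deg).trans_lt (by exact_mod_cast n.lt_succ_self)
    exact ⟨Polynomial.degreeLTEquiv R (n + 1) ⟨q, q_mem⟩, by ext i; simp [Φ, hq]⟩
  simpa using card_le_of_surjective R Φ surjective_Φ

lemma sum_le_of_forall_exists_iterate_derivative_eval_eq {R ι : Type*} [CommRing R] [Nontrivial R]
    {n : ℕ} (S : Finset ι) (mult : ι → ℕ) (t : ι → R)
    (h : ∀ d : ι → ℕ → R, ∃ q : Polynomial R, q.natDegree ≤ n ∧
      ∀ k ∈ S, ∀ m < mult k, (Polynomial.derivative^[m] q).eval (t k) = d k m) :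
    ∑ k ∈ S, mult k ≤ n + 1 := by
  classical
  let φ (x : Σ k : S, Fin (mult k)) : Polynomial R →ₗ[R] R :=
    Polynomial.leval (t x.1) ∘ₗ Polynomial.derivative ^ (x.2 : ℕ)
  have card_le : Fintype.card (Σ k : S, Fin (mult k)) ≤ n + 1 := by
    refine card_le_of_forall_exists_natDegree_le φ fun c => ?_
    obtain ⟨q, q_deg, hq⟩ :=
      h fun k m => if hkm : k ∈ S ∧ m < mult k then c ⟨⟨k, hkm.1⟩, ⟨m, hkm.2⟩⟩ else 0
    refine ⟨q, q_deg, fun ⟨⟨k, hk⟩, ⟨m, hm⟩⟩ => ?_⟩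
    simpa [φ, Module.End.pow_apply, hk, hm] using hq k hk m hm
  rw [← Finset.sum_coe_sort]
  simpa only [Fintype.card_sigma, Fintype.card_fin] using card_le

lemma exists_ne_zero_forall_eq_add_smul_of_collinear {K V : Type*} [DivisionRing K] [AddCommGroup V]
    [Module K V] [Nontrivial V] {s : Set V} (hs : Collinear K s) :
    ∃ u v : V, v ≠ 0 ∧ ∀ x ∈ s, ∃ t : K, x = u + t • v := by
  obtain ⟨u, v, hline⟩ := (collinear_iff_exists_forall_eq_smul_vadd s).1 hs
  by_cases hv : v = 0
  · obtain ⟨w, hw⟩ := exists_ne (0 : V)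
    exact ⟨u, w, hw, fun x hx => ⟨0, by simpa [hv] using hline x hx⟩⟩
  · exact ⟨u, v, hv, by simpa [add_comm] using hline⟩

section HermiteInterpolation

open Finset.HasAntidiagonal (antidiagonal mem_antidiagonal)

lemma iterate_directionalDeriv_eq_sum_Dij (v : Fin 2 → ℝ) (m : ℕ) (p : MvPolynomial (Fin 2) ℝ) :
    (directionalDeriv v)^[m] p =
      ∑ ab ∈ antidiagonal m,
        m.choose ab.1 • (v 0 ^ ab.1 * v 1 ^ ab.2) • Dij ab.1 ab.2 p := by
  let D (i : Fin 2) : Module.End ℝ (MvPolynomial (Fin 2) ℝ) := (pderiv i).toLinearMap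
  have D_commute : Commute (v 0 • D 0) (v 1 • D 1) :=
    ((commute_pderiv 0 1).smul_left _).smul_right _
  have directionalDeriv_eq : (directionalDeriv v).toLinearMap = v 0 • D 0 + v 1 • D 1 := by
    ext1 q
    simp [directionalDeriv_eq_sum_pderiv, D]
  have Dij_eq (a b : ℕ) : Dij a b p = (D 0 ^ a * D 1 ^ b) p := by
    simp only [Module.End.mul_apply, Module.End.pow_apply]
    rfl
  rw [← Derivation.coeFn_coe, ← Module.End.pow_apply, directionalDeriv_eq, D_commute.add_pow']
  simp only [Dij_eq, smul_pow, smul_mul_smul_comm, LinearMap.sum_apply, LinearMap.smul_apply]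

lemma HermiteSolvable.exists_iterate_directionalDeriv_eq {n s : ℕ} {nk : Fin s → ℕ}
    {A : Fin s → Fin 2 → ℝ} (hsolv : HermiteSolvable n s nk A) {v : Fin 2 → ℝ} (hv : v ≠ 0)
    (d : Fin s → ℕ → ℝ) :
    ∃ p : MvPolynomial (Fin 2) ℝ, p.totalDegree ≤ n ∧
      ∀ k, ∀ m < nk k, eval (A k) ((directionalDeriv v)^[m] p) = d k m := by
  have normSq_ne_zero : v 0 ^ 2 + v 1 ^ 2 ≠ 0 := by
    simpa [dotProduct, Fin.sum_univ_two, ← sq] using dotProduct_self_eq_zero.not.2 hv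
  -- Normalized so that the binomial expansion of `(v 0 ^ 2 + v 1 ^ 2) ^ m` leaves `d k m`.
  obtain ⟨p, p_deg, hp⟩ := hsolv fun k a b =>
    v 0 ^ a * v 1 ^ b * (d k (a + b) / (v 0 ^ 2 + v 1 ^ 2) ^ (a + b))
  refine ⟨p, p_deg, fun k m hm => ?_⟩
  have Dij_eq (ab : ℕ × ℕ) (hab : ab ∈ antidiagonal m) : eval (A k) (Dij ab.1 ab.2 p) =
      v 0 ^ ab.1 * v 1 ^ ab.2 * (d k m / (v 0 ^ 2 + v 1 ^ 2) ^ m) := by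
    have order_eq : ab.1 + ab.2 = m := mem_antidiagonal.1 hab
    rw [hp k ab.1 ab.2 (by omega), order_eq]
  calc eval (A k) ((directionalDeriv v)^[m] p)
      = ∑ ab ∈ antidiagonal m,
          m.choose ab.1 • (v 0 ^ ab.1 * v 1 ^ ab.2 * eval (A k) (Dij ab.1 ab.2 p)) := by
        simp only [iterate_directionalDeriv_eq_sum_Dij, map_sum, map_nsmul, smul_eval]
    _ = (∑ ab ∈ antidiagonal m, m.choose ab.1 • ((v 0 ^ 2) ^ ab.1 * (v 1 ^ 2) ^ ab.2)) *
          (d k m / (v 0 ^ 2 + v 1 ^ 2) ^ m) := by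
        rw [Finset.sum_mul]
        refine Finset.sum_congr rfl fun ab hab => ?_
        rw [Dij_eq ab hab]
        simp only [nsmul_eq_mul]
        ring
    _ = d k m := by
        rw [← (Commute.all _ _).add_pow', mul_div_cancel₀ _ (pow_ne_zero m normSq_ne_zero)]

theorem stmt_6_general {n s : ℕ} {nk : Fin s → ℕ} {A : Fin s → Fin 2 → ℝ}
    (hsolv : HermiteSolvable n s nk A) (S : Finset (Fin s)) (hcol : Collinear ℝ (A '' S)) :
    ∑ k ∈ S, nk k ≤ n + 1 := by
  obtain ⟨u, v, hv, hline⟩ := exists_ne_zero_forall_eq_add_smul_of_collinear hcol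
  choose! t ht using fun k (hk : k ∈ S) => hline (A k) (Set.mem_image_of_mem A hk)
  refine sum_le_of_forall_exists_iterate_derivative_eval_eq S nk t fun d => ?_
  obtain ⟨p, p_deg, hp⟩ := hsolv.exists_iterate_directionalDeriv_eq hv d
  refine ⟨lineRestriction u v p, (natDegree_lineRestriction_le u v p).trans p_deg, ?_⟩
  intro k hk m hm
  rw [eval_iterate_derivative_lineRestriction, ← ht k hk, hp k m hm]

end HermiteInterpolation

theorem stmt_6 (n s : ℕ) (nk : Fin s → ℕ) (hnk : ∀ k, 1 ≤ nk k)
    (A : Fin s → Fin 2 → ℝ) (hA : Function.Injective A)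
    (hsolv : HermiteSolvable n s nk A) :
    ∀ i j : Fin s, i ≠ j → nk i + nk j ≤ n + 1 := by
  intro i j hij
  simpa [Finset.sum_pair hij] using
    stmt_6_general hsolv {i, j} (by simpa [Set.image_pair] using collinear_pair ℝ (A i) (A j))
end

section
/- Let N = {n_1,…,n_s; n} be a scheme for distinct nodes X = {A_1,…,A_s} ⊂ ℝ² with Σ_{k=1}^s C(n_k+1,2) < C(n+2,2), and set r = C(n+2,2) − Σ_{k=1}^s C(n_k+1,2). Then the following are equivalent: (a) the Hermite interpolation problem (N,X) is n-solvable; (b) there exist r additional distinct points A_{s+1},…,A_{s+r} ∈ ℝ², different from the nodes of X, such that the augmented Hermite problem with scheme {n_1,…,n_s,1,…,1; n} (with r extra multiplicities equal to 1) on the node set X ∪ {A_{s+1},…,A_{s+r}} is n-correct. -/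
open MvPolynomial

/-- The Hermite interpolation problem with multiplicities `nk` on the nodes `A` is
`n`-correct: every data admits a unique interpolant in `Π_n`. -/
def HermiteCorrect (n s : ℕ) (nk : Fin s → ℕ) (A : Fin s → Fin 2 → ℝ) : Prop :=
  ∀ c : Fin s → ℕ → ℕ → ℝ,
    ∃! p : MvPolynomial (Fin 2) ℝ, p.totalDegree ≤ n ∧
      ∀ (k : Fin s) (i j : ℕ), i + j + 1 ≤ nk k → eval (A k) (Dij i j p) = c k i j

/-!
The solutions of the homogeneous problem `(N, X)` in `Π_n` form a space `W`, and for a solvable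
problem the conditions are independent, so `dim W = r`. A polynomial vanishing everywhere is zero,
so the point evaluations span the dual of `W` and some `r` of them form a basis of it. The
corresponding points leave only the zero solution of the augmented homogeneous problem, which has
as many conditions as `dim Π_n`; hence the augmented problem is correct. The nodes of a solvable
problem with positive multiplicities are automatically distinct, since different values can be
prescribed at any two of them.
-/

section SeparatingFunctionals

variable {K V F X : Type*} [Field K] [AddCommGroup V] [Module K V] [AddCommGroup F] [Module K F]

theorem exists_separating_fin_family [FiniteDimensional K V] {r : ℕ}
    (hr : Module.finrank K V = r) (ℓ : X → Module.Dual K V)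
    (hℓ : ∀ v, (∀ x, ℓ x v = 0) → v = 0) :
    ∃ x : Fin r → X, ∀ v, (∀ t, ℓ (x t) v = 0) → v = 0 := by
  have hspan : Submodule.span K (Set.range ℓ) = ⊤ :=
    Submodule.span_eq_top_of_ne_zero fun v hv => by
      obtain ⟨x, hx⟩ := not_forall.mp (mt (hℓ v) hv)
      exact ⟨ℓ x, Set.mem_range_self x, hx⟩
  have hbasis := Submodule.exists_fun_fin_finrank_span_eq K (Set.range ℓ)
  rw [hspan, finrank_top, Subspace.dual_finrank_eq, hr] at hbasis
  obtain ⟨f, hf, hfspan, -⟩ := hbasis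
  choose x hx using hf
  refine ⟨x, fun v hv => (Module.eval_apply_eq_zero_iff K v).mp ?_⟩
  refine LinearMap.ext_on_range hfspan fun t => ?_
  rw [← hx, Module.Dual.eval_apply, hv, LinearMap.zero_apply]

theorem exists_injective_prod_pi_of_separating (Λ : V →ₗ[K] F)
    [FiniteDimensional K (LinearMap.ker Λ)] {r : ℕ}
    (hr : Module.finrank K (LinearMap.ker Λ) = r) (ℓ : X → Module.Dual K V)
    (hℓ : ∀ v, (∀ x, ℓ x v = 0) → v = 0) :
    ∃ x : Fin r → X, Function.Injective (Λ.prod (LinearMap.pi fun t => ℓ (x t))) := by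
  obtain ⟨x, hx⟩ := exists_separating_fin_family hr
    (fun x => (ℓ x).domRestrict (LinearMap.ker Λ)) fun v hv => Subtype.ext (hℓ v hv)
  refine ⟨x, (injective_iff_map_eq_zero _).mpr fun v hv => ?_⟩
  obtain ⟨hΛ, hx₀⟩ := Prod.mk_eq_zero.mp hv
  exact congrArg Subtype.val (hx ⟨v, hΛ⟩ fun t => congrFun hx₀ t)

end SeparatingFunctionals

section Counting

/-- The pairs `(i, j)` with `i + j < m`. They index both the derivatives `D^{ij}` prescribed at a
node of multiplicity `m` and the monomials `x^i y^j` of degree less than `m`. -/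
def pairsBelow (m : ℕ) : Finset (ℕ × ℕ) :=
  (Finset.range m).biUnion Finset.HasAntidiagonal.antidiagonal

theorem mem_pairsBelow {m : ℕ} {x : ℕ × ℕ} : x ∈ pairsBelow m ↔ x.1 + x.2 + 1 ≤ m := by
  simp [pairsBelow]

theorem card_pairsBelow (m : ℕ) : (pairsBelow m).card = (m + 1).choose 2 := by
  have hdisj : ∀ a b : ℕ, a ≠ b → Disjoint (Finset.HasAntidiagonal.antidiagonal a)
      (Finset.HasAntidiagonal.antidiagonal b) := by
    simp only [Finset.disjoint_left, Finset.HasAntidiagonal.mem_antidiagonal]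
    exact fun a b hab x ha hb => hab (ha.symm.trans hb)
  rw [pairsBelow, Finset.card_biUnion fun a _ b _ => hdisj a b]
  simp only [Finset.Nat.card_antidiagonal]
  cases m with
  | zero => rfl
  | succ m => simpa using Nat.sum_range_add_choose m 1

/-- The exponents of bivariate monomials of degree at most `n`, as pairs. -/
noncomputable def exponentsEquivPairsBelow (n : ℕ) :
    {d : Fin 2 →₀ ℕ | d.sum (fun _ e => e) ≤ n} ≃ pairsBelow (n + 1) :=
  (Finsupp.equivFunOnFinite.trans (finTwoArrowEquiv ℕ)).subtypeEquiv fun d => by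
    simp [mem_pairsBelow, Finsupp.sum_fintype]

theorem finrank_restrictTotalDegree_fin_two (R : Type*) [CommRing R] [Nontrivial R] (n : ℕ) :
    Module.finrank R (restrictTotalDegree (Fin 2) R n) = (n + 2).choose 2 := by
  have hcard := Module.finrank_eq_card_basis
    ((basisRestrictSupport R _).reindex (exponentsEquivPairsBelow n))
  rwa [Fintype.card_coe, card_pairsBelow] at hcard

end Counting

section HermiteMap

/-- `Dij i j` as a linear map. -/
noncomputable def dijLinearMap (i j : ℕ) : MvPolynomial (Fin 2) ℝ →ₗ[ℝ] MvPolynomial (Fin 2) ℝ :=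
  ((pderiv 0).toLinearMap ^ i) ∘ₗ ((pderiv 1).toLinearMap ^ j)

theorem dijLinearMap_apply (i j : ℕ) (p : MvPolynomial (Fin 2) ℝ) :
    dijLinearMap i j p = Dij i j p := by
  simp only [dijLinearMap, Dij, LinearMap.comp_apply, Module.End.pow_apply]
  rfl

/-- The index set of the conditions of a Hermite problem with multiplicities `nk`: a node together
with the order `(i, j)` of a derivative prescribed there. -/
abbrev HermiteCondition {s : ℕ} (nk : Fin s → ℕ) : Type :=
  Σ k, pairsBelow (nk k)

theorem card_hermiteCondition {s : ℕ} (nk : Fin s → ℕ) :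
    Fintype.card (HermiteCondition nk) = ∑ k, (nk k + 1).choose 2 := by
  simp only [Fintype.card_sigma, Fintype.card_coe, card_pairsBelow]

variable {n s : ℕ} {nk : Fin s → ℕ} {A : Fin s → Fin 2 → ℝ}

variable (n nk A) in
/-- The linear map sending a polynomial of `Π_n` to its Hermite data at the nodes `A`. -/
noncomputable def hermiteMap :
    restrictTotalDegree (Fin 2) ℝ n →ₗ[ℝ] (HermiteCondition nk → ℝ) :=
  LinearMap.pi fun x =>
    (aeval (A x.1)).toLinearMap ∘ₗ dijLinearMap x.2.1.1 x.2.1.2 ∘ₗ Submodule.subtype _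

theorem hermiteMap_apply (p : restrictTotalDegree (Fin 2) ℝ n) (x : HermiteCondition nk) :
    hermiteMap n nk A p x = eval (A x.1) (Dij x.2.1.1 x.2.1.2 p) := by
  simp [hermiteMap, dijLinearMap_apply, aeval_eq_eval]

variable (n) in
/-- Evaluation at the point `b` as a linear functional on `Π_n`. -/
noncomputable def evalFunctional (b : Fin 2 → ℝ) :
    Module.Dual ℝ (restrictTotalDegree (Fin 2) ℝ n) :=
  (aeval b).toLinearMap ∘ₗ Submodule.subtype _

theorem evalFunctional_apply (b : Fin 2 → ℝ) (p : restrictTotalDegree (Fin 2) ℝ n) :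
    evalFunctional n b p = eval b (p : MvPolynomial (Fin 2) ℝ) := by
  simp [evalFunctional, aeval_eq_eval]

/-- The part of a full array of data that a Hermite problem with multiplicities `nk` uses. -/
def prescribedData (nk : Fin s → ℕ) (c : Fin s → ℕ → ℕ → ℝ) : HermiteCondition nk → ℝ :=
  fun x => c x.1 x.2.1.1 x.2.1.2

theorem prescribedData_surjective (nk : Fin s → ℕ) : Function.Surjective (prescribedData nk) := by
  intro d
  refine ⟨fun k i j => if h : (i, j) ∈ pairsBelow (nk k) then d ⟨k, (i, j), h⟩ else 0, ?_⟩
  ext ⟨k, ij, hij⟩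
  exact dif_pos hij

theorem hermiteMap_eq_prescribedData_iff {p : restrictTotalDegree (Fin 2) ℝ n}
    {c : Fin s → ℕ → ℕ → ℝ} :
    hermiteMap n nk A p = prescribedData nk c ↔
      ∀ (k : Fin s) (i j : ℕ), i + j + 1 ≤ nk k → eval (A k) (Dij i j p) = c k i j := by
  simp [funext_iff, hermiteMap_apply, prescribedData, Sigma.forall, mem_pairsBelow]

theorem hermiteSolvable_iff_surjective :
    HermiteSolvable n s nk A ↔ Function.Surjective (hermiteMap n nk A) := by
  rw [Function.Surjective, (prescribedData_surjective nk).forall]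
  simp only [hermiteMap_eq_prescribedData_iff, Subtype.exists, mem_restrictTotalDegree,
    exists_prop, HermiteSolvable]

theorem hermiteCorrect_iff_bijective :
    HermiteCorrect n s nk A ↔ Function.Bijective (hermiteMap n nk A) := by
  rw [Function.bijective_iff_existsUnique, (prescribedData_surjective nk).forall]
  simp only [hermiteMap_eq_prescribedData_iff, HermiteCorrect, ExistsUnique, Subtype.exists,
    Subtype.forall, mem_restrictTotalDegree, Subtype.mk.injEq, exists_prop, and_imp, and_assoc]

theorem HermiteCorrect.solvable (h : HermiteCorrect n s nk A) : HermiteSolvable n s nk A :=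
  fun c => (h c).exists

theorem hermiteCorrect_of_injective (hcard : ∑ k, (nk k + 1).choose 2 = (n + 2).choose 2)
    (h : Function.Injective (hermiteMap n nk A)) : HermiteCorrect n s nk A := by
  have hfinrank : Module.finrank ℝ (restrictTotalDegree (Fin 2) ℝ n) =
      Module.finrank ℝ (HermiteCondition nk → ℝ) := by
    rw [finrank_restrictTotalDegree_fin_two, Module.finrank_fintype_fun_eq_card,
      card_hermiteCondition, hcard]
  exact hermiteCorrect_iff_bijective.mpr
    ⟨h, (LinearMap.injective_iff_surjective_of_finrank_eq_finrank hfinrank).mp h⟩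

theorem HermiteSolvable.sum_add_finrank_ker (h : HermiteSolvable n s nk A) :
    ∑ k, (nk k + 1).choose 2 + Module.finrank ℝ (LinearMap.ker (hermiteMap n nk A)) =
      (n + 2).choose 2 := by
  have hrank := LinearMap.finrank_range_add_finrank_ker (hermiteMap n nk A)
  rwa [LinearMap.range_eq_top.mpr (hermiteSolvable_iff_surjective.mp h), finrank_top,
    Module.finrank_fintype_fun_eq_card, card_hermiteCondition,
    finrank_restrictTotalDegree_fin_two] at hrank

end HermiteMap

section Nodes

variable {n s r : ℕ} {nk : Fin s → ℕ} {A : Fin s → Fin 2 → ℝ}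

theorem HermiteSolvable.injective_nodes (h : HermiteSolvable n s nk A) (hnk : ∀ k, 1 ≤ nk k) :
    Function.Injective A := by
  intro k l hkl
  obtain ⟨p, -, hp⟩ := h fun m _ _ => if m = k then 1 else 0
  have hk : eval (A k) p = 1 := by simpa [Dij] using hp k 0 0 (hnk k)
  have hl : eval (A l) p = if l = k then 1 else 0 := hp l 0 0 (hnk l)
  by_contra hne
  rw [if_neg (Ne.symm hne), ← hkl, hk] at hl
  exact one_ne_zero hl

theorem HermiteSolvable.of_append {mk : Fin r → ℕ} {B : Fin r → Fin 2 → ℝ}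
    (h : HermiteSolvable n (s + r) (Fin.append nk mk) (Fin.append A B)) :
    HermiteSolvable n s nk A := by
  intro c
  obtain ⟨p, hp, hpc⟩ := h (Fin.append c 0)
  refine ⟨p, hp, fun k i j hij => ?_⟩
  simpa using hpc (Fin.castAdd r k) i j (by simpa using hij)

theorem hermiteMap_append_one_injective {B : Fin r → Fin 2 → ℝ}
    (h : Function.Injective
      ((hermiteMap n nk A).prod (LinearMap.pi fun t => evalFunctional n (B t)))) :
    Function.Injective (hermiteMap n (Fin.append nk fun _ => 1) (Fin.append A B)) := by
  refine (injective_iff_map_eq_zero _).mpr fun p hp => ?_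
  have hD := (hermiteMap_eq_prescribedData_iff (c := 0)).mp hp
  refine (injective_iff_map_eq_zero _).mp h p (Prod.ext ?_ ?_)
  · refine (hermiteMap_eq_prescribedData_iff (c := 0)).mpr fun k i j hij => ?_
    simpa using hD (Fin.castAdd r k) i j (by simpa using hij)
  · ext t
    simpa [Dij, evalFunctional_apply] using hD (Fin.natAdd s t) 0 0 (by simp)

theorem HermiteSolvable.exists_correct_append (h : HermiteSolvable n s nk A)
    (hr : ∑ k, (nk k + 1).choose 2 + r = (n + 2).choose 2) :
    ∃ B : Fin r → Fin 2 → ℝ,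
      HermiteCorrect n (s + r) (Fin.append nk fun _ => 1) (Fin.append A B) := by
  have hker : Module.finrank ℝ (LinearMap.ker (hermiteMap n nk A)) = r :=
    Nat.add_left_cancel (h.sum_add_finrank_ker.trans hr.symm)
  obtain ⟨B, hB⟩ := exists_injective_prod_pi_of_separating (hermiteMap n nk A) hker
    (evalFunctional n) fun p hp => Subtype.ext <| MvPolynomial.funext fun b => by
      simpa only [evalFunctional_apply, Submodule.coe_zero, map_zero] using hp b
  refine ⟨B, hermiteCorrect_of_injective ?_ (hermiteMap_append_one_injective hB)⟩
  simpa [Fin.sum_univ_add] using hr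

end Nodes

theorem stmt_10 (n s : ℕ) (nk : Fin s → ℕ) (hnk : ∀ k, 1 ≤ nk k)
    (A : Fin s → Fin 2 → ℝ) (hA : Function.Injective A)
    (hlt : ∑ k, Nat.choose (nk k + 1) 2 < Nat.choose (n + 2) 2)
    (r : ℕ) (hr : r = Nat.choose (n + 2) 2 - ∑ k, Nat.choose (nk k + 1) 2) :
    HermiteSolvable n s nk A ↔
      ∃ B : Fin r → Fin 2 → ℝ,
        Function.Injective (Fin.append A B) ∧
        HermiteCorrect n (s + r) (Fin.append nk fun _ => 1) (Fin.append A B) := by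
  constructor
  · intro hsolv
    obtain ⟨B, hB⟩ := hsolv.exists_correct_append (r := r) (by omega)
    have hpos : ∀ k, 1 ≤ Fin.append nk (fun _ : Fin r => 1) k :=
      Fin.addCases (by simpa using hnk) (by simp)
    exact ⟨B, hB.solvable.injective_nodes hpos, hB⟩
  · rintro ⟨B, -, hB⟩
    exact hB.solvable.of_append
end
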